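/- Let t_1,...,t_N be independent Bernoulli random variables with P(t_l = 1) = p_l ∈ [0,1], and for i ≤ N write P_i(k, j) for the probability that, among the first i coordinates, the lazarus count equals k and the last one-position equals j. Suppose i ≥ 3 and p_{i-1} > 0. Then: P_i(1, i) = p_i · P_{i-1}(1, i-1) + p_i · ((1 - p_{i-1}) / p_{i-1}) · P_{i-1}(0, i-1) − p_i · P_{i-1}(0, 0), and this equals p_i · P_{i-1}(1, i-1) + p_i · P_{i-1}(0, i-2). -/

import Mathlib

/-!
The pair (lazarus count, last one-position) of a prefix evolves deterministically when one
coordinate is appended. Appending a zero changes nothing; appending a one at position `m + 1`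
moves the last one-position to `m + 1` and turns the zeros after the previous last one (if there
is one) into lazarus zeros (`lazTo_succ_of_true`). Hence the event `(1, i)` at time `i` is
`t_i = 1` together with `(1, i-1)` or `(0, i-2)` at time `i - 1`; independence of `t_i` from the
first `i - 1` coordinates (`sum_bernProb_coord`) gives the second formula.

For the first formula, let `R` be the event that the first `i - 2` coordinates have lazarus count
`0` and last one-position `i - 2` or `0`. Then `(0, i-1)` at time `i - 1` is `R ∧ t_{i-1} = 1`,
while `R ∧ t_{i-1} = 0` is the disjoint union of `(0, i-2)` and `(0, 0)` at time `i - 1`. So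
`((1 - p_{i-1}) / p_{i-1}) P_{i-1}(0, i-1) = P_{i-1}(0, i-2) + P_{i-1}(0, 0)`.
-/

/-- Probability of the transaction `t` under independent Bernoulli coordinates, where item
`l ∈ {1,...,N}` (coordinate `l-1`) takes value `1` with probability `p l`. -/
noncomputable def bernProb (N : ℕ) (p : ℕ → ℝ) (t : Fin N → Bool) : ℝ :=
  ∏ l : Fin N, if t l = true then p ((l : ℕ) + 1) else 1 - p ((l : ℕ) + 1)

/-- The lazarus count of the restriction of `t` to its first `i` coordinates
(items `1,...,i`): the number of zeros lying strictly between two ones, all within the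
first `i` coordinates. -/
def lazTo (N : ℕ) (t : Fin N → Bool) (i : ℕ) : ℕ :=
  (Finset.univ.filter fun l : Fin N =>
    (l : ℕ) + 1 ≤ i ∧ t l = false ∧
      ∃ a b : Fin N, (b : ℕ) + 1 ≤ i ∧ a < l ∧ l < b ∧ t a = true ∧ t b = true).card

/-- The last one-position (in `{1,...,i}`, or `0` if none) of the restriction of `t` to its
first `i` coordinates. -/
def lastTo (N : ℕ) (t : Fin N → Bool) (i : ℕ) : ℕ :=
  (Finset.univ.filter fun l : Fin N => (l : ℕ) + 1 ≤ i ∧ t l = true).sup fun l => (l : ℕ) + 1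

/-- `P_i(k, j)`: the probability that, among the first `i` coordinates, the lazarus count
equals `k` and the last one-position equals `j`. -/
noncomputable def lazLastProb (N : ℕ) (p : ℕ → ℝ) (i k j : ℕ) : ℝ :=
  ∑ t ∈ Finset.univ.filter
      (fun t : Fin N → Bool => lazTo N t i = k ∧ lastTo N t i = j),
    bernProb N p t

lemma le_lastTo {N : ℕ} {t : Fin N → Bool} {m : ℕ} (a : Fin N) (ha : (a : ℕ) < m)
    (hta : t a = true) : (a : ℕ) + 1 ≤ lastTo N t m := by
  unfold lastTo
  exact Finset.le_sup (f := fun l : Fin N => (l : ℕ) + 1)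
    (by simp only [Finset.mem_filter, Finset.mem_univ, true_and]; exact ⟨ha, hta⟩)

lemma lastTo_le {N : ℕ} (t : Fin N → Bool) (m : ℕ) : lastTo N t m ≤ m := by
  unfold lastTo
  refine Finset.sup_le fun l hl => ?_
  simp only [Finset.mem_filter] at hl
  exact hl.2.1

lemma lastTo_attained {N : ℕ} (t : Fin N → Bool) (m : ℕ) (h : lastTo N t m ≠ 0) :
    ∃ a : Fin N, (a : ℕ) + 1 = lastTo N t m ∧ t a = true := by
  have hne : (Finset.univ.filter fun l : Fin N => (l : ℕ) + 1 ≤ m ∧ t l = true).Nonempty := by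
    by_contra hc
    rw [Finset.not_nonempty_iff_eq_empty] at hc
    apply h
    unfold lastTo
    rw [hc]
    rfl
  obtain ⟨a, ha, hs⟩ := Finset.exists_mem_eq_sup _ hne (fun l : Fin N => (l : ℕ) + 1)
  simp only [Finset.mem_filter] at ha
  exact ⟨a, hs.symm, ha.2.2⟩

lemma lazTo_eq_zero_of_lastTo {N : ℕ} (t : Fin N → Bool) (m : ℕ) (h : lastTo N t m = 0) :
    lazTo N t m = 0 := by
  unfold lazTo
  rw [Finset.card_eq_zero, Finset.filter_eq_empty_iff]
  rintro l - ⟨-, -, a, b, hb, -, -, -, htb⟩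
  have := le_lastTo b hb htb
  omega

lemma lazTo_congr {N : ℕ} {s t : Fin N → Bool} {m : ℕ}
    (h : ∀ l : Fin N, (l : ℕ) < m → s l = t l) : lazTo N s m = lazTo N t m := by
  unfold lazTo
  congr 1
  ext l
  simp only [Finset.mem_filter, Finset.mem_univ, true_and]
  constructor
  · rintro ⟨h1, h2, a, b, hb, hal, hlb, ha, htb⟩
    have hal' : (a : ℕ) < l := hal
    exact ⟨h1, by rw [← h l h1, h2], a, b, hb, hal, hlb,
      by rw [← h a (by omega), ha], by rw [← h b hb, htb]⟩
  · rintro ⟨h1, h2, a, b, hb, hal, hlb, ha, htb⟩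
    have hal' : (a : ℕ) < l := hal
    exact ⟨h1, by rw [h l h1, h2], a, b, hb, hal, hlb,
      by rw [h a (by omega), ha], by rw [h b hb, htb]⟩

lemma lastTo_congr {N : ℕ} {s t : Fin N → Bool} {m : ℕ}
    (h : ∀ l : Fin N, (l : ℕ) < m → s l = t l) : lastTo N s m = lastTo N t m := by
  unfold lastTo
  congr 1
  ext l
  simp only [Finset.mem_filter, Finset.mem_univ, true_and]
  exact and_congr_right fun h1 => by rw [h l h1]

lemma lastTo_succ_of_true {N : ℕ} {t : Fin N → Bool} (c : Fin N) (h : t c = true) :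
    lastTo N t (c + 1) = c + 1 :=
  le_antisymm (lastTo_le _ _) (le_lastTo c (Nat.lt_succ_self _) h)

lemma lastTo_succ_of_false {N : ℕ} {t : Fin N → Bool} (c : Fin N) (h : t c = false) :
    lastTo N t (c + 1) = lastTo N t c := by
  unfold lastTo
  congr 1
  ext l
  simp only [Finset.mem_filter, Finset.mem_univ, true_and]
  have : t l = true → (l : ℕ) ≠ c := by
    intro hl he
    rw [Fin.ext he, h] at hl
    exact absurd hl (by simp)
  constructor
  · rintro ⟨h1, h2⟩
    have := this h2
    exact ⟨by omega, h2⟩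
  · rintro ⟨h1, h2⟩
    exact ⟨by omega, h2⟩

lemma lazTo_succ_of_false {N : ℕ} {t : Fin N → Bool} (c : Fin N) (h : t c = false) :
    lazTo N t (c + 1) = lazTo N t c := by
  unfold lazTo
  congr 1
  ext l
  simp only [Finset.mem_filter, Finset.mem_univ, true_and]
  constructor
  · rintro ⟨h1, h2, a, b, hb, hal, hlb, ha, htb⟩
    have hlb' : (l : ℕ) < b := hlb
    have hbc : (b : ℕ) ≠ c := by
      intro he
      rw [Fin.ext he, h] at htb
      exact absurd htb (by simp)
    exact ⟨by omega, h2, a, b, by omega, hal, hlb, ha, htb⟩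
  · rintro ⟨h1, h2, a, b, hb, hal, hlb, ha, htb⟩
    exact ⟨by omega, h2, a, b, by omega, hal, hlb, ha, htb⟩

/-- Appending a one makes every zero after the previous last one a lazarus zero. If there is no
previous one, no zero becomes a lazarus zero. -/
lemma lazTo_succ_of_true {N : ℕ} {t : Fin N → Bool} (c : Fin N) (h : t c = true) :
    lazTo N t (c + 1) =
      lazTo N t c + if lastTo N t c = 0 then 0 else (c : ℕ) - lastTo N t c := by
  split_ifs with h0
  · rw [lazTo_eq_zero_of_lastTo t c h0]
    unfold lazTo
    rw [Finset.card_eq_zero, Finset.filter_eq_empty_iff]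
    rintro l - ⟨h1, -, a, b, hb, hal, hlb, ha, -⟩
    have hal' : (a : ℕ) < l := hal
    have := le_lastTo (m := c) a (by omega) ha
    omega
  · obtain ⟨j, hj, htj⟩ := lastTo_attained t c h0
    have hjc := lastTo_le t c
    have hcard : (Finset.univ.filter fun l : Fin N =>
        lastTo N t c ≤ (l : ℕ) ∧ (l : ℕ) < c).card = (c : ℕ) - lastTo N t c := by
      rw [← Nat.card_Ico, ← Finset.card_map Fin.valEmbedding]
      congr 1
      ext x
      simp only [Finset.mem_map, Finset.mem_filter, Finset.mem_univ, true_and,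
        Fin.valEmbedding_apply, Finset.mem_Ico]
      constructor
      · rintro ⟨l, hl, rfl⟩
        exact hl
      · intro hx
        exact ⟨⟨x, by omega⟩, hx, rfl⟩
    rw [← hcard]
    unfold lazTo
    rw [← Finset.card_union_of_disjoint]
    · congr 1
      ext l
      simp only [Finset.mem_union, Finset.mem_filter, Finset.mem_univ, true_and]
      constructor
      · rintro ⟨h1, h2, a, b, hb, hal, hlb, ha, htb⟩
        have hlb' : (l : ℕ) < b := hlb
        by_cases hl : lastTo N t c ≤ (l : ℕ)
        · exact Or.inr ⟨hl, by omega⟩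
        · -- the previous last one is then a one to the right of `l`
          have hlj : (l : ℕ) ≠ j := by
            intro he
            rw [Fin.ext he, htj] at h2
            exact absurd h2 (by simp)
          exact Or.inl ⟨by omega, h2, a, j, by omega, hal,
            Fin.lt_def.2 (by omega), ha, htj⟩
      · rintro (⟨h1, h2, a, b, hb, hal, hlb, ha, htb⟩ | ⟨h1, h2⟩)
        · exact ⟨by omega, h2, a, b, by omega, hal, hlb, ha, htb⟩
        · refine ⟨by omega, ?_, j, c, le_rfl, Fin.lt_def.2 (by omega), Fin.lt_def.2 h2, htj, h⟩
          by_contra hl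
          have := le_lastTo l h2 (by simpa using hl)
          omega
    · rw [Finset.disjoint_filter]
      rintro l - ⟨h1, h2, a, b, hb, hal, hlb, ha, htb⟩ ⟨h3, h4⟩
      have hlb' : (l : ℕ) < b := hlb
      have := le_lastTo b hb htb
      omega

/-- The weight of the coordinates other than `c`. -/
noncomputable def restProb (N : ℕ) (p : ℕ → ℝ) (c : Fin N) (t : Fin N → Bool) : ℝ :=
  ∏ l ∈ Finset.univ.erase c, if t l = true then p ((l : ℕ) + 1) else 1 - p ((l : ℕ) + 1)

lemma bernProb_eq (N : ℕ) (p : ℕ → ℝ) (c : Fin N) (t : Fin N → Bool) :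
    bernProb N p t =
      (if t c = true then p ((c : ℕ) + 1) else 1 - p ((c : ℕ) + 1)) * restProb N p c t :=
  (Finset.mul_prod_erase _ _ (Finset.mem_univ c)).symm

lemma restProb_update (N : ℕ) (p : ℕ → ℝ) (c : Fin N) (t : Fin N → Bool) (b : Bool) :
    restProb N p c (Function.update t c b) = restProb N p c t := by
  unfold restProb
  refine Finset.prod_congr rfl fun l hl => ?_
  rw [Function.update_of_ne (Finset.ne_of_mem_erase hl)]

/-- Independence: an event `Q` not depending on coordinate `c` meets `t c = b` with probability
`P(t c = b) * P(Q)`. -/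
lemma sum_bernProb_coord (N : ℕ) (p : ℕ → ℝ) (c : Fin N) (Q : (Fin N → Bool) → Prop)
    [DecidablePred Q] (hQ : ∀ t b, Q (Function.update t c b) ↔ Q t) (b : Bool) :
    ∑ t ∈ Finset.univ.filter (fun t => t c = b ∧ Q t), bernProb N p t =
      (if b = true then p ((c : ℕ) + 1) else 1 - p ((c : ℕ) + 1)) *
        ∑ t ∈ Finset.univ.filter Q, bernProb N p t := by
  have key : ∀ b : Bool, ∑ t ∈ Finset.univ.filter (fun t => t c = b ∧ Q t), bernProb N p t =
      (if b = true then p ((c : ℕ) + 1) else 1 - p ((c : ℕ) + 1)) *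
        ∑ t ∈ Finset.univ.filter (fun t => t c = true ∧ Q t), restProb N p c t := by
    intro b
    rw [Finset.mul_sum]
    refine Finset.sum_bij' (fun t _ => Function.update t c true)
      (fun t _ => Function.update t c b) ?_ ?_ ?_ ?_ ?_
    · intro t ht
      simp only [Finset.mem_filter, Finset.mem_univ, true_and] at ht ⊢
      exact ⟨by simp, (hQ _ _).2 ht.2⟩
    · intro t ht
      simp only [Finset.mem_filter, Finset.mem_univ, true_and] at ht ⊢
      exact ⟨by simp, (hQ _ _).2 ht.2⟩
    · intro t ht
      simp only [Finset.mem_filter, Finset.mem_univ, true_and] at ht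
      simp [← ht.1]
    · intro t ht
      simp only [Finset.mem_filter, Finset.mem_univ, true_and] at ht
      simp [← ht.1]
    · intro t ht
      simp only [Finset.mem_filter, Finset.mem_univ, true_and] at ht
      rw [restProb_update, bernProb_eq N p c, ht.1]
  have hsplit : ∑ t ∈ Finset.univ.filter Q, bernProb N p t =
      ∑ t ∈ Finset.univ.filter (fun t => t c = true ∧ Q t), bernProb N p t +
      ∑ t ∈ Finset.univ.filter (fun t => t c = false ∧ Q t), bernProb N p t := by
    rw [← Finset.sum_filter_add_sum_filter_not (Finset.univ.filter Q) (fun t => t c = true)]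
    simp only [Finset.filter_filter, Bool.not_eq_true, and_comm]
  rw [hsplit, key b, key true, key false]
  simp only [if_true, Bool.false_eq_true, if_false]
  ring

lemma sum_bernProb_or (N : ℕ) (p : ℕ → ℝ) (A B : (Fin N → Bool) → Prop)
    [DecidablePred A] [DecidablePred B] (h : ∀ t, A t → ¬ B t) :
    ∑ t ∈ Finset.univ.filter (fun t => A t ∨ B t), bernProb N p t =
      ∑ t ∈ Finset.univ.filter A, bernProb N p t +
      ∑ t ∈ Finset.univ.filter B, bernProb N p t := by
  rw [Finset.filter_or, Finset.sum_union (Finset.disjoint_filter.2 fun t _ => h t)]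

lemma lazTo_update {N : ℕ} (t : Fin N → Bool) (c : Fin N) (b : Bool) :
    lazTo N (Function.update t c b) c = lazTo N t c :=
  lazTo_congr fun _ hl => Function.update_of_ne (Fin.ne_of_lt hl) _ _

lemma lastTo_update {N : ℕ} (t : Fin N → Bool) (c : Fin N) (b : Bool) :
    lastTo N (Function.update t c b) c = lastTo N t c :=
  lastTo_congr fun _ hl => Function.update_of_ne (Fin.ne_of_lt hl) _ _

/-- The second formula, for the coordinate `c` carrying item `i = c + 1`. -/
lemma lazLastProb_one_succ (N : ℕ) (p : ℕ → ℝ) (c : Fin N) (hc : 2 ≤ (c : ℕ)) :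
    lazLastProb N p (c + 1) 1 (c + 1) =
      p (c + 1) * (lazLastProb N p c 1 c + lazLastProb N p c 0 (c - 1)) := by
  unfold lazLastProb
  rw [← sum_bernProb_or N p _ _ (by intro t hA hB; omega)]
  have := sum_bernProb_coord N p c
    (fun t => (lazTo N t c = 1 ∧ lastTo N t c = c) ∨ (lazTo N t c = 0 ∧ lastTo N t c = c - 1))
    (by intro t b; rw [lazTo_update, lastTo_update]) true
  rw [if_pos rfl] at this
  rw [← this]
  refine Finset.sum_congr (Finset.filter_congr fun t _ => ?_) fun _ _ => rfl
  cases h : t c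
  · have h1 := lastTo_succ_of_false c h
    have h2 := lastTo_le t c
    simp only [Bool.false_eq_true, false_and, iff_false]
    omega
  · have h1 := lastTo_succ_of_true c h
    have h2 := lazTo_succ_of_true c h
    have h3 := lastTo_le t c
    have h4 := lazTo_eq_zero_of_lastTo t c
    simp only [true_and]
    split_ifs at h2 <;> omega

/-- Flipping item `d + 1` from one to zero in the event `(0, d + 1)`. -/
lemma lazLastProb_zero_flip (N : ℕ) (p : ℕ → ℝ) (d : Fin N) (hd : 1 ≤ (d : ℕ)) :
    (1 - p (d + 1)) * lazLastProb N p (d + 1) 0 (d + 1) =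
      p (d + 1) * (lazLastProb N p (d + 1) 0 d + lazLastProb N p (d + 1) 0 0) := by
  have key := sum_bernProb_coord N p d
    (fun t => lazTo N t d = 0 ∧ (lastTo N t d = d ∨ lastTo N t d = 0))
    (by intro t b; rw [lazTo_update, lastTo_update])
  have e1 := key true
  have e2 := key false
  simp only [if_true, Bool.false_eq_true, if_false] at e1 e2
  have f1 : lazLastProb N p (d + 1) 0 (d + 1) = ∑ t ∈ Finset.univ.filter (fun t : Fin N → Bool =>
      t d = true ∧ lazTo N t d = 0 ∧ (lastTo N t d = d ∨ lastTo N t d = 0)),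
        bernProb N p t := by
    refine Finset.sum_congr (Finset.filter_congr fun t _ => ?_) fun _ _ => rfl
    cases h : t d
    · have h1 := lastTo_succ_of_false d h
      have h2 := lastTo_le t d
      simp only [Bool.false_eq_true, false_and, iff_false]
      omega
    · have h1 := lastTo_succ_of_true d h
      have h2 := lazTo_succ_of_true d h
      have h3 := lastTo_le t d
      simp only [true_and]
      split_ifs at h2 <;> omega
  have f2 : lazLastProb N p (d + 1) 0 d + lazLastProb N p (d + 1) 0 0 =
      ∑ t ∈ Finset.univ.filter (fun t : Fin N → Bool =>
        t d = false ∧ lazTo N t d = 0 ∧ (lastTo N t d = d ∨ lastTo N t d = 0)),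
        bernProb N p t := by
    unfold lazLastProb
    rw [← sum_bernProb_or N p _ _ (by intro t hA hB; omega)]
    refine Finset.sum_congr (Finset.filter_congr fun t _ => ?_) fun _ _ => rfl
    cases h : t d
    · have h1 := lastTo_succ_of_false d h
      have h2 := lazTo_succ_of_false d h
      simp only [true_and]
      omega
    · have h1 := lastTo_succ_of_true d h
      simp only [Bool.true_eq_false, false_and, iff_false]
      omega
  rw [f1, f2, e1, e2]
  ring

/-- the case `k = 1` of the constant-size lazarus recurrence, for `i ≥ 3` and
`p_{i-1} > 0`. -/
theorem lazarus_recurrence_k_eq_one (N : ℕ) (p : ℕ → ℝ)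
    (hp : ∀ l, 1 ≤ l → l ≤ N → 0 ≤ p l ∧ p l ≤ 1)
    (i : ℕ) (hi3 : 3 ≤ i) (hiN : i ≤ N) (hpi : 0 < p (i - 1)) :
    lazLastProb N p i 1 i
        = p i * lazLastProb N p (i - 1) 1 (i - 1)
          + p i * ((1 - p (i - 1)) / p (i - 1)) * lazLastProb N p (i - 1) 0 (i - 1)
          - p i * lazLastProb N p (i - 1) 0 0 ∧
      lazLastProb N p i 1 i
        = p i * lazLastProb N p (i - 1) 1 (i - 1)
          + p i * lazLastProb N p (i - 1) 0 (i - 2) := by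
  have h1 := lazLastProb_one_succ N p ⟨i - 1, by omega⟩ (by simp only; omega)
  have h2 := lazLastProb_zero_flip N p ⟨i - 2, by omega⟩ (by simp only; omega)
  have ei : i - 1 + 1 = i := by omega
  have esucc : i - 2 + 1 = i - 1 := by omega
  have epred : i - 1 - 1 = i - 2 := by omega
  simp only [ei, epred] at h1
  simp only [esucc] at h2
  have h3 : (1 - p (i - 1)) / p (i - 1) * lazLastProb N p (i - 1) 0 (i - 1) =
      lazLastProb N p (i - 1) 0 (i - 2) + lazLastProb N p (i - 1) 0 0 := by
    rw [div_mul_eq_mul_div, h2, mul_div_cancel_left₀ _ hpi.ne']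
  refine ⟨?_, by rw [h1]; ring⟩
  rw [h1, mul_assoc (p i) (_ / _), h3]
  ring
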